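/- arXiv:1905.09269 — 2 statements merged into one kernel-verified Lean document; each statement's English description precedes it below -/
import Mathlib

section
/- Let n ≥ 1 and let X be a skew-symmetric n×n complex matrix (Xᵀ = −X). Then the trace of (ad X)⁶, viewed as a linear endomorphism of the Lie subalgebra 𝔰𝔬(n,ℂ) of skew-symmetric n×n complex matrices, equals (n − 32)·Tr(X⁶) + 15·Tr(X²)·Tr(X⁴). -/
/-!
For a skew-symmetric matrix `X`, the commuting operators `L_X : Y ↦ X Y` and `R_X : Y ↦ Y X` turn
`(ad X) ^ k = (L_X - R_X) ^ k` into a binomial sum of the operators `Y ↦ X ^ i Y (-X) ^ j` with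
`i + j = k`. Composed with the projection `Y ↦ (Y - Yᵀ) / 2` onto the skew-symmetric matrices, the
operator `Y ↦ A Y B` has trace `(tr A tr B - tr (A Bᵀ)) / 2`. As `(-X) ^ j` is the transpose of
`X ^ j`, every correction term `tr (A Bᵀ)` equals `tr (X ^ k)`, so
`2 tr (ad X) ^ k = (∑ i + j = k, (k choose i) tr (X ^ i) tr (X ^ j)) - 2 ^ k tr (X ^ k)`.
For `k = 6` the odd traces vanish and the remaining terms are `2 (n - 32) tr (X ^ 6)` and
`30 tr (X ^ 2) tr (X ^ 4)`.
-/

open Matrix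

noncomputable section

/-- The adjoint action `ad X : Y ↦ X·Y − Y·X` as a linear endomorphism of the matrix space. -/
def adM {m : Type*} [Fintype m] [DecidableEq m] (X : Matrix m m ℂ) :
    Module.End ℂ (Matrix m m ℂ) :=
  LinearMap.mulLeft ℂ X - LinearMap.mulRight ℂ X

theorem adM_apply {m : Type*} [Fintype m] [DecidableEq m] (X Y : Matrix m m ℂ) :
    adM X Y = X * Y - Y * X := rfl

/-- The subspace `𝔰𝔬(n,ℂ)` of skew-symmetric `n×n` complex matrices. -/
def soSub (n : ℕ) : Submodule ℂ (Matrix (Fin n) (Fin n) ℂ) where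
  carrier := {Y | Yᵀ = -Y}
  add_mem' := by
    intro a b ha hb
    simp only [Set.mem_setOf_eq] at *
    rw [Matrix.transpose_add, ha, hb, neg_add]
  zero_mem' := by simp
  smul_mem' := by
    intro c a ha
    simp only [Set.mem_setOf_eq] at *
    rw [Matrix.transpose_smul, ha, smul_neg]

/-- For skew-symmetric `X`, `ad X` preserves `𝔰𝔬(n,ℂ)`. -/
theorem adM_mem_so {n : ℕ} {X : Matrix (Fin n) (Fin n) ℂ} (hX : Xᵀ = -X) :
    ∀ Y ∈ soSub n, adM X Y ∈ soSub n := by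
  intro Y hY
  have hY' : Yᵀ = -Y := hY
  show (adM X Y)ᵀ = -(adM X Y)
  rw [adM_apply, Matrix.transpose_sub, Matrix.transpose_mul, Matrix.transpose_mul, hX, hY']
  simp [Matrix.neg_mul, Matrix.mul_neg, neg_sub]

open LieAlgebra Orthogonal LinearMap Finset

attribute [local instance] LieRing.ofAssociativeRing

section Submodule

variable {R M : Type*} [CommRing R] [AddCommGroup M] [Module R M] [Module.Free R M]
  [Module.Finite R M] {p : Submodule R M} [Module.Free R p] [Module.Finite R p]

theorem trace_restrict_eq_trace_mul_of_isProj {f π : Module.End R M} (hπ : IsProj p π)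
    (hf : ∀ x ∈ p, f x ∈ p) : trace R p (f.restrict hf) = trace R M (f * π) := by
  have factor : f.restrict hf = hπ.codRestrict ∘ₗ f ∘ₗ p.subtype := by
    ext x
    exact (hπ.map_id _ (hf x x.2)).symm
  rw [factor, trace_comp_comm', LinearMap.comp_assoc, hπ.subtype_comp_codRestrict,
    Module.End.mul_eq_comp]

end Submodule

theorem mul_single_mul_apply {α l m n o : Type*} [NonUnitalNonAssocSemiring α] [Fintype m]
    [Fintype n] [DecidableEq m] [DecidableEq n] (A : Matrix l m α) (B : Matrix n o α)
    (i : l) (j : m) (j' : n) (k : o) (c : α) :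
    (A * single j j' c * B) i k = A i j * c * B j' k := by
  rw [Matrix.mul_apply, Finset.sum_eq_single j'] <;> simp +contextual

section CommRing

variable {R m n : Type*} [CommRing R] [Fintype m] [Fintype n]

theorem trace_eq_sum_apply_single [DecidableEq m] [DecidableEq n]
    (f : Module.End R (Matrix m n R)) :
    trace R _ f = ∑ i, ∑ j, f (single i j 1) i j := by
  rw [trace_eq_matrix_trace R (stdBasis R m n), Matrix.trace, Fintype.sum_prod_type]
  simp only [diag_apply, toMatrix_apply, stdBasis_eq_single]
  simp [stdBasis, Pi.basis_repr]

theorem trace_mulLeft_mul_mulRight (A B : Matrix m m R) :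
    trace R _ (mulLeft R A * mulRight R B) = A.trace * B.trace := by
  classical
  simp [trace_eq_sum_apply_single, ← Matrix.mul_assoc, mul_single_mul_apply, Matrix.trace,
    Finset.sum_mul_sum]

theorem trace_mulLeft_mul_mulRight_mul_transpose (A B : Matrix m m R) :
    trace R _ (mulLeft R A * mulRight R B * (transposeLinearEquiv m m R R).toLinearMap) =
      (A * Bᵀ).trace := by
  classical
  calc
    _ = ∑ i, ∑ j, (A * single j i (1 : R) * B : Matrix m m R) i j := by
      simp [trace_eq_sum_apply_single, ← Matrix.mul_assoc]
    _ = ∑ i, ∑ j, A i j * B i j := by simp_rw [mul_single_mul_apply, mul_one]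
    _ = (A * Bᵀ).trace := rfl

theorem ad_pow_eq_sum {A : Type*} [Ring A] [Algebra R A] (x : A) (k : ℕ) :
    ad R A x ^ k =
      ∑ ij ∈ antidiagonal k, k.choose ij.1 • (mulLeft R (x ^ ij.1) * mulRight R ((-x) ^ ij.2)) := by
  have ad_eq : ad R A x = mulLeft R x + mulRight R (-x) := by
    ext y
    simp [Ring.lie_def, sub_eq_add_neg]
  simp_rw [ad_eq, (commute_mulLeft_right x (-x)).add_pow', pow_mulLeft, pow_mulRight]

theorem neg_pow_eq_transpose_of_mem_so [DecidableEq m] {X : Matrix m m R} (hX : X ∈ so m R)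
    (k : ℕ) : (-X) ^ k = (X ^ k)ᵀ := by
  rw [Matrix.transpose_pow, (mem_so m R X).1 hX]

end CommRing

section Field

variable {K m : Type*} [Field K] [NeZero (2 : K)] [Fintype m]

variable (K m) in
/-- The skew-symmetric part `Y ↦ (Y - Yᵀ) / 2` of a square matrix, as an endomorphism of the full
matrix space, so that traces over `so m K` become traces over all matrices. -/
def skewPart : Module.End K (Matrix m m K) :=
  (2⁻¹ : K) • (1 - (transposeLinearEquiv m m K K).toLinearMap)

theorem isProj_skewPart [DecidableEq m] : IsProj (so m K).toSubmodule (skewPart K m) where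
  map_mem Y := (mem_so m K _).2 <| by simp [skewPart, ← smul_neg]
  map_id Y hY := by
    have hY : Yᵀ = -Y := (mem_so m K Y).1 hY
    simp [skewPart, hY, ← two_smul K Y, smul_smul, two_ne_zero]

theorem two_mul_trace_mulLeft_mul_mulRight_mul_skewPart (A B : Matrix m m K) :
    2 * trace K _ (mulLeft K A * mulRight K B * skewPart K m) =
      A.trace * B.trace - (A * Bᵀ).trace := by
  rw [skewPart, mul_smul_comm, mul_sub, mul_one, map_smul, map_sub, trace_mulLeft_mul_mulRight,
    trace_mulLeft_mul_mulRight_mul_transpose, smul_eq_mul, mul_inv_cancel_left₀ two_ne_zero]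

theorem two_mul_trace_mulLeft_pow_mul_mulRight_neg_pow_mul_skewPart [DecidableEq m]
    {X : Matrix m m K} (hX : X ∈ so m K) (i j : ℕ) :
    2 * trace K _ (mulLeft K (X ^ i) * mulRight K ((-X) ^ j) * skewPart K m) =
      (X ^ i).trace * (X ^ j).trace - (X ^ (i + j)).trace := by
  rw [two_mul_trace_mulLeft_mul_mulRight_mul_skewPart, neg_pow_eq_transpose_of_mem_so hX,
    Matrix.trace_transpose, transpose_transpose, pow_add]

theorem trace_ad_so_pow_eq_trace_mul_skewPart [DecidableEq m] (X : so m K) (k : ℕ) :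
    trace K (so m K) (ad K (so m K) X ^ k) =
      trace K _ (ad K (Matrix m m K) X ^ k * skewPart K m) := by
  have maps_so : ∀ Y ∈ (so m K).toSubmodule, (ad K _ (X : Matrix m m K) ^ k) Y ∈ so m K :=
    fun Y hY ↦ LieSubalgebra.coe_ad_pow K _ _ X ⟨Y, hY⟩ k ▸ SetLike.coe_mem _
  have ad_pow_eq : ad K (so m K) X ^ k = (ad K _ (X : Matrix m m K) ^ k).restrict maps_so := by
    ext1 Y
    exact Subtype.ext (LieSubalgebra.coe_ad_pow K _ _ X Y k)
  rw [ad_pow_eq]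
  exact trace_restrict_eq_trace_mul_of_isProj isProj_skewPart maps_so

theorem two_mul_trace_ad_so_pow [DecidableEq m] (X : so m K) (k : ℕ) :
    2 * trace K (so m K) (ad K (so m K) X ^ k) =
      ∑ ij ∈ antidiagonal k, k.choose ij.1 *
          (((X : Matrix m m K) ^ ij.1).trace * ((X : Matrix m m K) ^ ij.2).trace) -
        2 ^ k * ((X : Matrix m m K) ^ k).trace := by
  obtain ⟨X, hX⟩ := X
  have sum_choose : ∑ ij ∈ antidiagonal k, (k.choose ij.1 : K) = 2 ^ k := by
    rw [Nat.sum_antidiagonal_eq_sum_range_succ fun i _ ↦ (k.choose i : K)]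
    exact_mod_cast congrArg (Nat.cast : ℕ → K) (Nat.sum_range_choose k)
  calc 2 * trace K (so m K) (ad K (so m K) ⟨X, hX⟩ ^ k)
    _ = ∑ ij ∈ antidiagonal k, k.choose ij.1 *
          (2 * trace K _ (mulLeft K (X ^ ij.1) * mulRight K ((-X) ^ ij.2) * skewPart K m)) := by
      rw [trace_ad_so_pow_eq_trace_mul_skewPart, ad_pow_eq_sum, Finset.sum_mul, map_sum,
        Finset.mul_sum]
      refine Finset.sum_congr rfl fun _ _ ↦ ?_
      rw [smul_mul_assoc, map_nsmul, nsmul_eq_mul, mul_left_comm]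
    _ = ∑ ij ∈ antidiagonal k, (k.choose ij.1 *
          ((X ^ ij.1).trace * (X ^ ij.2).trace) - k.choose ij.1 * (X ^ k).trace) :=
      Finset.sum_congr rfl fun ij h ↦ by
        rw [two_mul_trace_mulLeft_pow_mul_mulRight_neg_pow_mul_skewPart hX, mul_sub,
          mem_antidiagonal.1 h]
    _ = _ := by rw [Finset.sum_sub_distrib, ← Finset.sum_mul, sum_choose]

theorem trace_pow_eq_zero_of_mem_so_of_odd [DecidableEq m] {X : Matrix m m K} (hX : X ∈ so m K)
    {k : ℕ} (hk : Odd k) : (X ^ k).trace = 0 := by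
  have trace_eq_neg : (X ^ k).trace = -(X ^ k).trace := by
    rw [← Matrix.trace_neg, ← hk.neg_pow, neg_pow_eq_transpose_of_mem_so hX,
      Matrix.trace_transpose]
  have two_mul_trace : 2 * (X ^ k).trace = 0 := by linear_combination trace_eq_neg
  exact (mul_eq_zero.1 two_mul_trace).resolve_left two_ne_zero

theorem so_trace_ad_six_general [DecidableEq m] (X : so m K) :
    trace K (so m K) (ad K (so m K) X ^ 6) =
      (Fintype.card m - 32) * ((X : Matrix m m K) ^ 6).trace +
        15 * ((X : Matrix m m K) ^ 2).trace * ((X : Matrix m m K) ^ 4).trace := by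
  refine mul_left_cancel₀ (two_ne_zero (α := K)) ?_
  have trace_eq_zero : (X : Matrix m m K).trace = 0 := by
    simpa using trace_pow_eq_zero_of_mem_so_of_odd X.2 odd_one
  have trace_pow_three := trace_pow_eq_zero_of_mem_so_of_odd X.2 (k := 3) (by decide)
  rw [two_mul_trace_ad_so_pow, Nat.sum_antidiagonal_eq_sum_range_succ_mk]
  simp only [Finset.sum_range_succ, Finset.range_zero, Finset.sum_empty, Nat.choose, Nat.cast_one,
    pow_zero, pow_one, Matrix.trace_one, trace_eq_zero, trace_pow_three, Nat.reduceAdd,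
    Nat.reduceSub, Nat.cast_ofNat]
  ring

end Field

theorem trace_restrict_adM_pow {n : ℕ} {X : Matrix (Fin n) (Fin n) ℂ} (hX : Xᵀ = -X) (k : ℕ) :
    trace ℂ (soSub n) ((adM X).restrict (adM_mem_so hX) ^ k) =
      trace ℂ (so (Fin n) ℂ) (ad ℂ (so (Fin n) ℂ) ⟨X, (mem_so _ ℂ X).2 hX⟩ ^ k) := by
  let e : soSub n ≃ₗ[ℂ] so (Fin n) ℂ :=
    LinearEquiv.ofEq _ (so (Fin n) ℂ).toSubmodule (Submodule.ext fun Y ↦ (mem_so _ ℂ Y).symm)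
  have conj_ad : e.conj ((adM X).restrict (adM_mem_so hX)) =
      ad ℂ (so (Fin n) ℂ) ⟨X, (mem_so _ ℂ X).2 hX⟩ := rfl
  have conj_pow : e.conj ((adM X).restrict (adM_mem_so hX) ^ k) =
      e.conj ((adM X).restrict (adM_mem_so hX)) ^ k := map_pow (e.conjAlgEquiv ℂ) _ k
  rw [← trace_conj' _ e, conj_pow, conj_ad]

/-- For skew-symmetric `X`, the trace of `(ad X)⁶` on `𝔰𝔬(n,ℂ)` equals
`(n−32)·Tr(X⁶) + 15·Tr(X²)·Tr(X⁴)`. -/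
theorem so_trace_ad_six (n : ℕ) (hn : 1 ≤ n) (X : Matrix (Fin n) (Fin n) ℂ) (hX : Xᵀ = -X) :
    LinearMap.trace ℂ ↥(soSub n) (((adM X).restrict (adM_mem_so hX)) ^ 6)
      = ((n : ℂ) - 32) * (X ^ 6).trace + 15 * (X ^ 2).trace * (X ^ 4).trace := by
  rw [trace_restrict_adM_pow hX]
  simpa using so_trace_ad_six_general ⟨X, (mem_so _ ℂ X).2 hX⟩

end
end

section
/- Let n ≥ 1, let J be the standard 2n×2n symplectic matrix (block form [[0, −1],[1, 0]]), and let X be a 2n×2n complex matrix with Xᵀ·J = −J·X. Let D_X = X ⊗ 1 + 1 ⊗ X acting on ℂ^{2n} ⊗ ℂ^{2n}, and let Tr_ad denote the trace of (ad X)⁴ on the Lie subalgebra 𝔰𝔭(2n,ℂ) = {Y : Yᵀ·J = −J·Y}. Then 2·Tr_ad = Tr(D_X⁴) + 16·Tr(X⁴). Equivalently, writing Tr_{∧²}(X⁴) = Tr(D_X⁴) − Tr_ad for the trace of X⁴ on the exterior square of ℂ^{2n} (so that 𝔰𝔭(2n,ℂ) ≅ S²ℂ^{2n} carries the remaining trace),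 one has 2·Tr_{∧²}(X⁴) + 32·Tr(X⁴) = 2·Tr_ad. -/
open Matrix

noncomputable section

/-- The subspace `𝔰𝔭(2n,ℂ)` of `2n×2n` complex matrices `Y` with `Yᵀ·J = −J·Y`,
where `J = [[0,−1],[1,0]]` is the standard symplectic matrix `Matrix.J`. -/
def spSub (n : ℕ) : Submodule ℂ (Matrix (Fin n ⊕ Fin n) (Fin n ⊕ Fin n) ℂ) where
  carrier := {Y | Yᵀ * Matrix.J (Fin n) ℂ = -(Matrix.J (Fin n) ℂ * Y)}
  add_mem' := by
    intro a b ha hb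
    simp only [Set.mem_setOf_eq] at *
    rw [Matrix.transpose_add, Matrix.add_mul, ha, hb, Matrix.mul_add, neg_add]
  zero_mem' := by simp
  smul_mem' := by
    intro c a ha
    simp only [Set.mem_setOf_eq] at *
    rw [Matrix.transpose_smul, Matrix.smul_mul, ha, Matrix.mul_smul, smul_neg]

theorem key_mul {n : ℕ} {J A B : Matrix (Fin n ⊕ Fin n) (Fin n ⊕ Fin n) ℂ}
    (hA : Aᵀ * J = -(J * A)) (hB : Bᵀ * J = -(J * B)) :
    (A * B)ᵀ * J = J * (B * A) := by
  rw [Matrix.transpose_mul, Matrix.mul_assoc, hA, Matrix.mul_neg, ← Matrix.mul_assoc, hB,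
    Matrix.neg_mul, neg_neg, Matrix.mul_assoc]

/-- For `X ∈ 𝔰𝔭(2n,ℂ)`, `ad X` preserves `𝔰𝔭(2n,ℂ)`. -/
theorem adM_mem_sp {n : ℕ} {X : Matrix (Fin n ⊕ Fin n) (Fin n ⊕ Fin n) ℂ}
    (hX : Xᵀ * Matrix.J (Fin n) ℂ = -(Matrix.J (Fin n) ℂ * X)) :
    ∀ Y ∈ spSub n, adM X Y ∈ spSub n := by
  intro Y hY
  have hY' : Yᵀ * Matrix.J (Fin n) ℂ = -(Matrix.J (Fin n) ℂ * Y) := hY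
  show (adM X Y)ᵀ * Matrix.J (Fin n) ℂ = -(Matrix.J (Fin n) ℂ * adM X Y)
  rw [adM_apply, Matrix.transpose_sub, Matrix.sub_mul, key_mul hX hY', key_mul hY' hX,
    Matrix.mul_sub, neg_sub]

/-- `D_X = X ⊗ 1 + 1 ⊗ X` acting on `ℂ^m ⊗ ℂ^m`. -/
def DX {m : Type*} [Fintype m] [DecidableEq m] (X : Matrix m m ℂ) :
    Module.End ℂ (TensorProduct ℂ (m → ℂ) (m → ℂ)) :=
  LinearMap.rTensor (m → ℂ) (Matrix.toLin' X) + LinearMap.lTensor (m → ℂ) (Matrix.toLin' X)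

/-!
The isomorphism `ℂ²ⁿ ⊗ ℂ²ⁿ ≃ M₂ₙ(ℂ)`, `x ⊗ y ↦ x yᵀ J`, identifies the symmetric tensors with
`𝔰𝔭(2n,ℂ)` and carries `D_X` to `ad X` for `X ∈ 𝔰𝔭(2n,ℂ)`, so `Tr_ad` is a trace on `S²ℂ²ⁿ`.
Since `(1 + τ)/2` projects onto `S²ℂ²ⁿ`, where `τ` swaps the two factors,
`2 · Tr_{S²}(D_X^k) = Tr(D_X^k) + Tr(τ D_X^k)`.
Now `Tr(τ (A ⊗ B)) = Tr(AB)`, so each of the `2^k` terms in the expansion of `D_X^k` contributes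
`Tr(X^k)` to the last trace.
-/

open scoped TensorProduct

theorem trace_pow_eq_of_intertwines {R M N : Type*} [CommRing R] [AddCommGroup M] [Module R M]
    [AddCommGroup N] [Module R N] {f : Module.End R M} {g : Module.End R N} (e : M ≃ₗ[R] N)
    (h : ∀ x, e (f x) = g (e x)) (k : ℕ) :
    LinearMap.trace R N (g ^ k) = LinearMap.trace R M (f ^ k) := by
  have hconj : g = e.conjRingEquiv f := by
    ext y
    simp [h]
  rw [hconj, ← map_pow]
  exact LinearMap.trace_conj' (f ^ k) e

section Involution

variable {R M : Type*} [CommRing R] [IsDomain R] [IsPrincipalIdealRing R] [AddCommGroup M]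
  [Module R M] [Module.Finite R M] [Module.Free R M]

theorem two_mul_trace_restrict_eqLocus_of_involutive {σ f : Module.End R M}
    (hσ : Function.Involutive σ)
    (hf : ∀ x ∈ LinearMap.eqLocus σ LinearMap.id, f x ∈ LinearMap.eqLocus σ LinearMap.id) :
    2 * LinearMap.trace R (LinearMap.eqLocus σ LinearMap.id) (f.restrict hf)
      = LinearMap.trace R M f + LinearMap.trace R M (σ * f) := by
  have hmem : ∀ x, (f + σ * f) x ∈ LinearMap.eqLocus σ LinearMap.id := fun x => by
    simp [LinearMap.mem_eqLocus, hσ (f x), add_comm]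
  have hrestrict : (f + σ * f).restrict (fun x _ => hmem x) = 2 • f.restrict hf := by
    ext x
    have hfx : σ (f x) = f x := hf x x.2
    simp [hfx, two_smul]
  calc 2 * LinearMap.trace R (LinearMap.eqLocus σ LinearMap.id) (f.restrict hf)
      = LinearMap.trace R _ ((f + σ * f).restrict fun x _ => hmem x) := by
        rw [hrestrict, map_nsmul, nsmul_eq_mul, Nat.cast_ofNat]
    _ = LinearMap.trace R M (f + σ * f) := LinearMap.trace_restrict_eq_of_forall_mem _ _ hmem
    _ = LinearMap.trace R M f + LinearMap.trace R M (σ * f) := map_add _ _ _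

end Involution

section SymmetricSquare

variable {R M : Type*} [CommRing R] [AddCommGroup M] [Module R M]

variable (R M) in
/-- The symmetric square `S²M`, encoded as the submodule of tensors in `M ⊗ M` fixed by the
swap of the two factors. -/
def symmetricTensors : Submodule R (M ⊗[R] M) :=
  LinearMap.eqLocus (TensorProduct.comm R M M).toLinearMap LinearMap.id

/-- The action `f ⊗ 1 + 1 ⊗ f` on `M ⊗ M` of an endomorphism `f` of `M`, seen as an element of the
Lie algebra `𝔤𝔩(M)`. -/
def tensorDerivation (f : Module.End R M) : Module.End R (M ⊗[R] M) :=
  f.rTensor M + f.lTensor M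

theorem comm_tensorDerivation (f : Module.End R M) (t : M ⊗[R] M) :
    TensorProduct.comm R M M (tensorDerivation f t)
      = tensorDerivation f (TensorProduct.comm R M M t) := by
  induction t with
  | zero => simp
  | tmul x y => simp [tensorDerivation, add_comm]
  | add s t hs ht => simp only [map_add, hs, ht]

theorem tensorDerivation_mem_symmetricTensors (f : Module.End R M) :
    ∀ t ∈ symmetricTensors R M, tensorDerivation f t ∈ symmetricTensors R M := fun t ht =>
  (comm_tensorDerivation f t).trans (congrArg (tensorDerivation f) ht)

theorem tensorDerivation_pow (f : Module.End R M) (k : ℕ) :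
    tensorDerivation f ^ k = ∑ j ∈ Finset.range (k + 1),
      k.choose j • TensorProduct.map (f ^ j) (f ^ (k - j)) := by
  have hcomm : Commute (f.rTensor M) (f.lTensor M) :=
    (LinearMap.rTensor_comp_lTensor _ f f).trans (LinearMap.lTensor_comp_rTensor _ f f).symm
  rw [tensorDerivation, hcomm.add_pow]
  refine Finset.sum_congr rfl fun j _ => ?_
  rw [LinearMap.rTensor_pow, LinearMap.lTensor_pow, ← Nat.cast_comm, ← nsmul_eq_mul,
    Module.End.mul_eq_comp, LinearMap.rTensor_comp_lTensor]

variable [Module.Finite R M] [Module.Free R M]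

theorem trace_comm_mul_map (f g : Module.End R M) :
    LinearMap.trace R (M ⊗[R] M) ((TensorProduct.comm R M M).toLinearMap * TensorProduct.map f g)
      = LinearMap.trace R M (f * g) := by
  classical
  let b := Module.Free.chooseBasis R M
  have hdiag (i j) : LinearMap.toMatrix (b.tensorProduct b) (b.tensorProduct b)
      ((TensorProduct.comm R M M).toLinearMap * TensorProduct.map f g) (i, j) (i, j)
        = LinearMap.toMatrix b b f j i * LinearMap.toMatrix b b g i j := by
    rw [LinearMap.toMatrix_apply, Module.Basis.tensorProduct_apply]
    simp [LinearMap.toMatrix_apply]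
  rw [LinearMap.trace_eq_matrix_trace R (b.tensorProduct b), LinearMap.trace_eq_matrix_trace R b,
    LinearMap.toMatrix_mul b f g, Matrix.trace, Matrix.trace, Fintype.sum_prod_type_right]
  simp only [Matrix.diag_apply, hdiag, Matrix.mul_apply]

theorem trace_comm_mul_tensorDerivation_pow (f : Module.End R M) (k : ℕ) :
    LinearMap.trace R (M ⊗[R] M)
        ((TensorProduct.comm R M M).toLinearMap * tensorDerivation f ^ k)
      = 2 ^ k * LinearMap.trace R M (f ^ k) := by
  calc LinearMap.trace R (M ⊗[R] M)
        ((TensorProduct.comm R M M).toLinearMap * tensorDerivation f ^ k)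
      = ∑ j ∈ Finset.range (k + 1), k.choose j • LinearMap.trace R M (f ^ j * f ^ (k - j)) := by
        simp only [tensorDerivation_pow, Finset.mul_sum, mul_smul_comm, map_sum, map_nsmul,
          trace_comm_mul_map]
    _ = ∑ j ∈ Finset.range (k + 1), k.choose j • LinearMap.trace R M (f ^ k) :=
        Finset.sum_congr rfl fun j hj => by
          rw [← pow_add, Nat.add_sub_cancel' (Finset.mem_range_succ_iff.1 hj)]
    _ = 2 ^ k * LinearMap.trace R M (f ^ k) := by
        rw [← Finset.sum_smul, Nat.sum_range_choose, nsmul_eq_mul, Nat.cast_pow, Nat.cast_ofNat]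

theorem two_mul_trace_restrict_symmetricTensors_pow [IsDomain R] [IsPrincipalIdealRing R]
    (f : Module.End R M) (k : ℕ) :
    2 * LinearMap.trace R (symmetricTensors R M)
        ((tensorDerivation f).restrict (tensorDerivation_mem_symmetricTensors f) ^ k)
      = LinearMap.trace R (M ⊗[R] M) (tensorDerivation f ^ k)
        + 2 ^ k * LinearMap.trace R M (f ^ k) := by
  rw [Module.End.pow_restrict, ← trace_comm_mul_tensorDerivation_pow]
  exact two_mul_trace_restrict_eqLocus_of_involutive (TensorProduct.comm_comm R M M) _

end SymmetricSquare

section TensorMatrix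

variable {R m n : Type*} [CommRing R] [Fintype n] [DecidableEq n]

variable (R m n) in
/-- The identification of `Rᵐ ⊗ Rⁿ` with the `m × n` matrices sending `x ⊗ y` to `x yᵀ`. -/
def tensorEquivMatrix : (m → R) ⊗[R] (n → R) ≃ₗ[R] Matrix m n R :=
  TensorProduct.piScalarRight R R (m → R) n ≪≫ₗ Matrix.ofLinearEquiv R ≪≫ₗ
    Matrix.transposeLinearEquiv n m R R

@[simp]
theorem tensorEquivMatrix_tmul (x : m → R) (y : n → R) :
    tensorEquivMatrix R m n (x ⊗ₜ y) = vecMulVec x y := by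
  ext i j
  simp [tensorEquivMatrix, vecMulVec_apply, mul_comm]

theorem tensorEquivMatrix_lTensor (A : Matrix n n R) (t : (m → R) ⊗[R] (n → R)) :
    tensorEquivMatrix R m n ((toLin' A).lTensor (m → R) t) = tensorEquivMatrix R m n t * Aᵀ := by
  induction t with
  | zero => simp
  | tmul x y => simp [vecMulVec_mul, vecMul_transpose]
  | add s t hs ht => simp only [map_add, hs, ht, Matrix.add_mul]

variable [Fintype m] [DecidableEq m]

theorem tensorEquivMatrix_rTensor (A : Matrix m m R) (t : (m → R) ⊗[R] (n → R)) :
    tensorEquivMatrix R m n ((toLin' A).rTensor (n → R) t) = A * tensorEquivMatrix R m n t := by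
  induction t with
  | zero => simp
  | tmul x y => simp [mul_vecMulVec]
  | add s t hs ht => simp only [map_add, hs, ht, Matrix.mul_add]

theorem tensorEquivMatrix_tensorDerivation (A : Matrix m m R) (t : (m → R) ⊗[R] (m → R)) :
    tensorEquivMatrix R m m (tensorDerivation (toLin' A) t)
      = A * tensorEquivMatrix R m m t + tensorEquivMatrix R m m t * Aᵀ := by
  rw [tensorDerivation, LinearMap.add_apply, map_add, tensorEquivMatrix_rTensor,
    tensorEquivMatrix_lTensor]

theorem tensorEquivMatrix_comm (t : (m → R) ⊗[R] (n → R)) :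
    tensorEquivMatrix R n m (TensorProduct.comm R _ _ t) = (tensorEquivMatrix R m n t)ᵀ := by
  induction t with
  | zero => simp
  | tmul x y => simp [transpose_vecMulVec]
  | add s t hs ht => simp only [map_add, hs, ht, transpose_add]

theorem mem_symmetricTensors_iff_isSymm (t : (m → R) ⊗[R] (m → R)) :
    t ∈ symmetricTensors R (m → R) ↔ (tensorEquivMatrix R m m t).IsSymm := by
  rw [Matrix.IsSymm, ← tensorEquivMatrix_comm, EmbeddingLike.apply_eq_iff_eq]
  rfl

end TensorMatrix

section Symplectic

theorem isUnit_J (l R : Type*) [Fintype l] [DecidableEq l] [CommRing R] : IsUnit (J l R) :=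
  (isUnit_iff_isUnit_det _).2 (isUnit_det_J l R)

theorem adM_mul_of_transpose_mul_eq_neg {m : Type*} [Fintype m] [DecidableEq m]
    {X B : Matrix m m ℂ} (hX : Xᵀ * B = -(B * X)) (S : Matrix m m ℂ) :
    adM X (S * B) = (X * S + S * Xᵀ) * B := by
  rw [adM_apply, add_mul, mul_assoc S Xᵀ, hX, mul_neg, sub_eq_add_neg, mul_assoc, mul_assoc]

theorem DX_eq_tensorDerivation {m : Type*} [Fintype m] [DecidableEq m] (X : Matrix m m ℂ) :
    DX X = tensorDerivation (toLin' X) :=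
  rfl

variable {n : ℕ}

theorem mul_J_mem_spSub_iff_isSymm (S : Matrix (Fin n ⊕ Fin n) (Fin n ⊕ Fin n) ℂ) :
    S * J (Fin n) ℂ ∈ spSub n ↔ S.IsSymm := by
  change (S * J (Fin n) ℂ)ᵀ * J (Fin n) ℂ = -(J (Fin n) ℂ * (S * J (Fin n) ℂ)) ↔ Sᵀ = S
  rw [transpose_mul, J_transpose, neg_mul, neg_mul, neg_inj, mul_assoc,
    (isUnit_J (Fin n) ℂ).mul_right_inj, (isUnit_J (Fin n) ℂ).mul_left_inj]

variable (n) in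
/-- The isomorphism `S²ℂ²ⁿ ≃ 𝔰𝔭(2n,ℂ)` sending a symmetric tensor, read as a symmetric
matrix `S`, to `S J`. -/
def symmetricTensorsEquivSp : symmetricTensors ℂ (Fin n ⊕ Fin n → ℂ) ≃ₗ[ℂ] spSub n :=
  let mulJ := (isUnit_J (Fin n) ℂ).unit.mulRightLinearEquiv ℂ
  LinearEquiv.ofEq _ _ (Submodule.ext fun t =>
      (mem_symmetricTensors_iff_isSymm t).trans (mul_J_mem_spSub_iff_isSymm _).symm) ≪≫ₗ
    (tensorEquivMatrix ℂ _ _ ≪≫ₗ mulJ).ofSubmodule' (spSub n)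

theorem coe_symmetricTensorsEquivSp (t : symmetricTensors ℂ (Fin n ⊕ Fin n → ℂ)) :
    (symmetricTensorsEquivSp n t : Matrix (Fin n ⊕ Fin n) (Fin n ⊕ Fin n) ℂ)
      = tensorEquivMatrix ℂ _ _ t.1 * J (Fin n) ℂ :=
  rfl

variable {X : Matrix (Fin n ⊕ Fin n) (Fin n ⊕ Fin n) ℂ}
  (hX : Xᵀ * J (Fin n) ℂ = -(J (Fin n) ℂ * X))

theorem symmetricTensorsEquivSp_tensorDerivation
    (t : symmetricTensors ℂ (Fin n ⊕ Fin n → ℂ)) :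
    symmetricTensorsEquivSp n
        ((tensorDerivation (toLin' X)).restrict (tensorDerivation_mem_symmetricTensors _) t)
      = (adM X).restrict (adM_mem_sp hX) (symmetricTensorsEquivSp n t) := by
  ext1
  rw [coe_symmetricTensorsEquivSp, LinearMap.coe_restrict_apply, LinearMap.coe_restrict_apply,
    coe_symmetricTensorsEquivSp, tensorEquivMatrix_tensorDerivation,
    adM_mul_of_transpose_mul_eq_neg hX]

theorem trace_adM_restrict_sp_pow (k : ℕ) :
    LinearMap.trace ℂ (spSub n) ((adM X).restrict (adM_mem_sp hX) ^ k)
      = LinearMap.trace ℂ (symmetricTensors ℂ (Fin n ⊕ Fin n → ℂ))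
          ((tensorDerivation (toLin' X)).restrict (tensorDerivation_mem_symmetricTensors _) ^ k) :=
  trace_pow_eq_of_intertwines (M := symmetricTensors ℂ (Fin n ⊕ Fin n → ℂ)) (N := spSub n)
    (symmetricTensorsEquivSp n) (symmetricTensorsEquivSp_tensorDerivation hX) k

end Symplectic

theorem D5_brane_anomaly_sp_general (n k : ℕ) (X : Matrix (Fin n ⊕ Fin n) (Fin n ⊕ Fin n) ℂ)
    (hX : Xᵀ * Matrix.J (Fin n) ℂ = -(Matrix.J (Fin n) ℂ * X)) :
    2 * LinearMap.trace ℂ ↥(spSub n) (((adM X).restrict (adM_mem_sp hX)) ^ k)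
      = LinearMap.trace ℂ (TensorProduct ℂ ((Fin n ⊕ Fin n) → ℂ) ((Fin n ⊕ Fin n) → ℂ))
          (DX X ^ k)
        + 2 ^ k * (X ^ k).trace := by
  rw [trace_adM_restrict_sp_pow hX, two_mul_trace_restrict_symmetricTensors_pow,
    DX_eq_tensorDerivation, ← toLin'_pow, trace_toLin'_eq]

/-- For `X ∈ 𝔰𝔭(2n,ℂ)`: `2·Tr_ad = Tr(D_X⁴) + 16·Tr(X⁴)`, where `Tr_ad` is the trace of
`(ad X)⁴` on `𝔰𝔭(2n,ℂ)`; equivalently, writing `Tr_{∧²}(X⁴) = Tr(D_X⁴) − Tr_ad`, one has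
`2·Tr_{∧²}(X⁴) + 32·Tr(X⁴) = 2·Tr_ad`. -/
theorem D5_brane_anomaly_sp (n : ℕ) (hn : 1 ≤ n) (X : Matrix (Fin n ⊕ Fin n) (Fin n ⊕ Fin n) ℂ)
    (hX : Xᵀ * Matrix.J (Fin n) ℂ = -(Matrix.J (Fin n) ℂ * X)) :
    2 * LinearMap.trace ℂ ↥(spSub n) (((adM X).restrict (adM_mem_sp hX)) ^ 4)
      = LinearMap.trace ℂ (TensorProduct ℂ ((Fin n ⊕ Fin n) → ℂ) ((Fin n ⊕ Fin n) → ℂ))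
          (DX X ^ 4)
        + 16 * (X ^ 4).trace ∧
    2 * (LinearMap.trace ℂ (TensorProduct ℂ ((Fin n ⊕ Fin n) → ℂ) ((Fin n ⊕ Fin n) → ℂ))
            (DX X ^ 4)
          - LinearMap.trace ℂ ↥(spSub n) (((adM X).restrict (adM_mem_sp hX)) ^ 4))
      + 32 * (X ^ 4).trace
      = 2 * LinearMap.trace ℂ ↥(spSub n) (((adM X).restrict (adM_mem_sp hX)) ^ 4) := by
  have h := D5_brane_anomaly_sp_general n 4 X hX
  exact ⟨by linear_combination h, by linear_combination -2 * h⟩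

end
end
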